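/- Let θ : ℝ² → ℝ be C¹ with θ ∈ L^∞(ℝ²) ∩ L²(ℝ²) ∩ L¹(ℝ²) and ∇θ bounded, and define u(x) = lim_{ε→0⁺} ∫_{|y|>ε} y^⊥ θ(x+y)/|y|³ dy (with y^⊥ = (−y₂,y₁)). If ‖∇θ‖_{L^∞} ≥ e, then |u(x)| ≤ C log(‖∇θ‖_{L^∞}) for all x ∈ ℝ², where C depends only on ‖θ‖_{L^∞}, ‖θ‖_{L²} and ‖θ‖_{L¹}; that is, the velocity is bounded logarithmically in terms of the maximum of the gradient of θ. -/

import Mathlib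

open MeasureTheory Set Filter Topology

noncomputable section

/-- First standard basis vector of `ℝ²`. -/
def v1 : ℝ × ℝ := (1, 0)

/-- Second standard basis vector of `ℝ²`. -/
def v2 : ℝ × ℝ := (0, 1)

/-- Partial derivative of `f : ℝ² → ℝ` in the direction `v` at `x`. -/
def pd (f : ℝ × ℝ → ℝ) (v x : ℝ × ℝ) : ℝ := fderiv ℝ f x v

/-- Gradient `∇f = (∂f/∂x₁, ∂f/∂x₂)`. -/
def grad2 (f : ℝ × ℝ → ℝ) (x : ℝ × ℝ) : ℝ × ℝ := (pd f v1 x, pd f v2 x)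

/-- Euclidean norm on `ℝ²`. -/
def e2 (y : ℝ × ℝ) : ℝ := Real.sqrt (y.1 ^ 2 + y.2 ^ 2)

/-- `y^⊥ = (−y₂, y₁)`. -/
def perp (y : ℝ × ℝ) : ℝ × ℝ := (-y.2, y.1)

/-!
The kernel `y^⊥ / |y|³` is odd and of size `|y|⁻²`, so its integral diverges only logarithmically at
`0` and at `∞`. Split the plane at the radii `1 / G` and `1`. Inside `|y| < 1 / G`, oddness allows
one to replace `θ(x + y)` by `θ(x + y) - θ(x)`, which is at most `G |y|`, so this part contributes
`O(1)`. The annulus `1 / G < |y| < 1` contributes at most `‖θ‖_∞ ∫ |y|⁻² = 2π ‖θ‖_∞ log G`. Outside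
the unit disc the kernel lies in every `L^q` with `q > 1`, so Hölder's inequality bounds the
remaining part by any `L^p` norm of `θ` with `p < ∞`. Only the oddness and the size of the kernel
matter, so the same estimate holds in every finite dimension and for every norm; for the Euclidean
norm of the plane it is applied on `ℂ`, since the norm of `ℝ × ℝ` is the sup norm.
-/

lemma pow_sub_one_mul_inv_pow {n : ℕ} (hn : n ≠ 0) {r : ℝ} (hr : r ≠ 0) :
    r ^ (n - 1) * (r ^ n)⁻¹ = r⁻¹ := by
  rw [← pow_sub_one_mul hn r]
  field_simp

section RadialIntegrals

open Module (finrank)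

variable {E : Type*} [NormedAddCommGroup E] [NormedSpace ℝ E] [FiniteDimensional ℝ E]
  [Nontrivial E] [MeasurableSpace E] [BorelSpace E] {μ : Measure E} [μ.IsAddHaarMeasure]

lemma integrableOn_fun_norm_preimage_iff {s : Set ℝ} (hs : MeasurableSet s) (hs₀ : s ⊆ Ioi 0)
    {f : ℝ → ℝ} :
    IntegrableOn (fun x ↦ f ‖x‖) (norm ⁻¹' s) μ ↔
      IntegrableOn (fun r ↦ r ^ (finrank ℝ E - 1) * f r) s := by
  rw [← integrable_indicator_iff (measurable_norm hs)]
  change Integrable (fun x ↦ s.indicator f ‖x‖) μ ↔ _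
  rw [integrable_fun_norm_addHaar]
  simp only [smul_eq_mul, ← indicator_mul_right s fun r ↦ r ^ (finrank ℝ E - 1)]
  rw [IntegrableOn, integrable_indicator_iff hs, IntegrableOn, Measure.restrict_restrict hs,
    inter_eq_self_of_subset_left hs₀, IntegrableOn]

lemma setIntegral_fun_norm_preimage {s : Set ℝ} (hs : MeasurableSet s) (hs₀ : s ⊆ Ioi 0)
    (f : ℝ → ℝ) :
    ∫ x in norm ⁻¹' s, f ‖x‖ ∂μ =
      μ.toSphere.real univ * ∫ r in s, r ^ (finrank ℝ E - 1) * f r := by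
  rw [← integral_indicator (measurable_norm hs)]
  change ∫ x, s.indicator f ‖x‖ ∂μ = _
  rw [integral_fun_norm_addHaar, μ.toSphere_real_apply_univ]
  simp only [smul_eq_mul, nsmul_eq_mul,
    ← indicator_mul_right s fun r ↦ r ^ (finrank ℝ E - 1)]
  rw [setIntegral_indicator hs, inter_eq_self_of_subset_right hs₀, mul_assoc]

lemma integrableOn_inv_norm_pow_finrank {a b : ℝ} (ha : 0 < a) :
    IntegrableOn (fun x : E ↦ (‖x‖ ^ finrank ℝ E)⁻¹) (norm ⁻¹' Ioc a b) μ := by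
  have hs₀ : Ioc a b ⊆ Ioi 0 := fun r hr ↦ ha.trans hr.1
  refine (integrableOn_fun_norm_preimage_iff measurableSet_Ioc hs₀
    (f := fun r ↦ (r ^ finrank ℝ E)⁻¹)).2 ?_
  have hinv : ∀ r ∈ Ioc a b, r ^ (finrank ℝ E - 1) * (r ^ finrank ℝ E)⁻¹ = r⁻¹ := fun r hr ↦
    pow_sub_one_mul_inv_pow Module.finrank_pos.ne' (ne_of_gt (hs₀ hr))
  rw [integrableOn_congr_fun hinv measurableSet_Ioc]
  refine ContinuousOn.integrableOn_Icc (fun r hr ↦ ?_) |>.mono_set Ioc_subset_Icc_self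
  exact (continuousAt_inv₀ (ha.trans_le hr.1).ne').continuousWithinAt

lemma setIntegral_inv_norm_pow_finrank {a b : ℝ} (ha : 0 < a) (hab : a ≤ b) :
    ∫ x in norm ⁻¹' Ioc a b, (‖x‖ ^ finrank ℝ E)⁻¹ ∂μ =
      μ.toSphere.real univ * Real.log (b / a) := by
  have hs₀ : Ioc a b ⊆ Ioi 0 := fun r hr ↦ ha.trans hr.1
  rw [setIntegral_fun_norm_preimage measurableSet_Ioc hs₀ (fun r ↦ (r ^ finrank ℝ E)⁻¹),
    setIntegral_congr_fun measurableSet_Ioc fun r hr ↦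
      pow_sub_one_mul_inv_pow Module.finrank_pos.ne' (ne_of_gt (hs₀ hr)),
    ← intervalIntegral.integral_of_le hab, integral_inv_of_pos ha (ha.trans_le hab)]

lemma integrableOn_norm_mul_inv_norm_pow_finrank {a b : ℝ} (ha : 0 < a) :
    IntegrableOn (fun x : E ↦ ‖x‖ * (‖x‖ ^ finrank ℝ E)⁻¹) (norm ⁻¹' Ioc a b) μ := by
  refine ((integrableOn_inv_norm_pow_finrank ha).const_mul b).mono' (by fun_prop) ?_
  filter_upwards [ae_restrict_mem (measurable_norm measurableSet_Ioc)] with x hx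
  rw [Real.norm_of_nonneg (by positivity)]
  gcongr
  exact hx.2

lemma setIntegral_norm_mul_inv_norm_pow_finrank {a b : ℝ} (ha : 0 < a) (hab : a ≤ b) :
    ∫ x in norm ⁻¹' Ioc a b, ‖x‖ * (‖x‖ ^ finrank ℝ E)⁻¹ ∂μ = μ.toSphere.real univ * (b - a) := by
  have hs₀ : Ioc a b ⊆ Ioi 0 := fun r hr ↦ ha.trans hr.1
  have hone : ∀ r ∈ Ioc a b, r ^ (finrank ℝ E - 1) * (r * (r ^ finrank ℝ E)⁻¹) = 1 := fun r hr ↦ by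
    rw [mul_left_comm, pow_sub_one_mul_inv_pow Module.finrank_pos.ne' (ne_of_gt (hs₀ hr)),
      mul_inv_cancel₀ (ne_of_gt (hs₀ hr))]
  rw [setIntegral_fun_norm_preimage measurableSet_Ioc hs₀ (fun r ↦ r * (r ^ finrank ℝ E)⁻¹),
    setIntegral_congr_fun measurableSet_Ioc hone]
  simp [hab]

lemma memLp_inv_norm_pow_finrank_restrict_Ioi_one {q : ENNReal} (hq : 1 < q) :
    MemLp (fun x : E ↦ (‖x‖ ^ finrank ℝ E)⁻¹) q (μ.restrict (norm ⁻¹' Ioi 1)) := by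
  have hmeas : AEStronglyMeasurable (fun x : E ↦ (‖x‖ ^ finrank ℝ E)⁻¹)
      (μ.restrict (norm ⁻¹' Ioi 1)) := by fun_prop
  obtain rfl | hq_top := eq_or_ne q ⊤
  · refine memLp_top_of_bound hmeas 1 ?_
    filter_upwards [ae_restrict_mem (measurable_norm measurableSet_Ioi)] with x hx
    rw [Real.norm_of_nonneg (by positivity)]
    exact inv_le_one_of_one_le₀ (one_le_pow₀ (le_of_lt hx))
  have hq_one : 1 < q.toReal := by
    simpa using (ENNReal.toReal_lt_toReal ENNReal.one_ne_top hq_top).2 hq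
  have hdim : (1 : ℝ) ≤ finrank ℝ E := by exact_mod_cast Module.finrank_pos
  rw [← integrable_norm_rpow_iff hmeas (zero_lt_one.trans hq).ne' hq_top]
  refine (integrableOn_fun_norm_preimage_iff measurableSet_Ioi (Ioi_subset_Ioi zero_le_one)
    (f := fun r ↦ ‖(r ^ finrank ℝ E)⁻¹‖ ^ q.toReal)).2 ?_
  have hpow : ∀ r ∈ Ioi (1 : ℝ), r ^ (finrank ℝ E - 1) * ‖(r ^ finrank ℝ E)⁻¹‖ ^ q.toReal =
      r ^ ((finrank ℝ E : ℝ) - 1 - finrank ℝ E * q.toReal) := fun r hr ↦ by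
    have hr₀ : 0 < r := zero_lt_one.trans hr
    rw [Real.norm_of_nonneg (by positivity), Real.inv_rpow (by positivity),
      Real.rpow_sub hr₀, Real.rpow_mul hr₀.le, Real.rpow_natCast, ← div_eq_mul_inv]
    rw [← Real.rpow_natCast, Nat.cast_sub Module.finrank_pos, Nat.cast_one]
  rw [integrableOn_congr_fun hpow measurableSet_Ioi]
  exact integrableOn_Ioi_rpow_of_lt (by nlinarith) one_pos

end RadialIntegrals

section Auxiliary

variable {α F : Type*} [MeasurableSpace α] [NormedAddCommGroup F] [NormedSpace ℝ F]

lemma norm_integral_smul_le_lpNorm_mul_lpNorm {μ : Measure α} {p q : ENNReal}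
    [ENNReal.HolderConjugate p q] {φ : α → ℝ} {f : α → F} (hφ : MemLp φ p μ) (hf : MemLp f q μ) :
    ‖∫ x, φ x • f x ∂μ‖ ≤ lpNorm φ p μ * lpNorm f q μ := by
  rw [← toReal_eLpNorm hφ.1, ← toReal_eLpNorm hf.1, ← ENNReal.toReal_mul, ← toReal_enorm]
  refine ENNReal.toReal_mono (ENNReal.mul_ne_top hφ.eLpNorm_ne_top hf.eLpNorm_ne_top) ?_
  calc ‖∫ x, φ x • f x ∂μ‖ₑ ≤ eLpNorm (φ • f) 1 μ := by
        rw [eLpNorm_one_eq_lintegral_enorm]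
        exact enorm_integral_le_lintegral_enorm _
    _ ≤ eLpNorm φ p μ * eLpNorm f q μ := eLpNorm_smul_le_mul_eLpNorm hf.1 hφ.1

lemma setIntegral_eq_zero_of_odd [InvolutiveNeg α] [MeasurableNeg α] {μ : Measure α}
    [μ.IsNegInvariant] {f : α → F} (hf : f.Odd) {s : Set α} (hs : -s = s) :
    ∫ x in s, f x ∂μ = 0 := by
  have hself := (Measure.measurePreserving_neg μ).setIntegral_preimage_emb
    (MeasurableEquiv.neg α).measurableEmbedding f s
  have hpre : Neg.neg ⁻¹' s = s := hs
  simp only [hpre, hf _, integral_neg] at hself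
  have : IsAddTorsionFree F := .of_isTorsionFree ℝ F
  exact self_eq_neg.1 hself.symm

lemma setIntegral_norm_preimage_Ioi_eq_add {E : Type*} [NormedAddCommGroup E] [MeasurableSpace E]
    [OpensMeasurableSpace E] {μ : Measure E} {f : E → F} {a b c : ℝ} (hab : a ≤ b) (hbc : b ≤ c)
    (hf_ab : IntegrableOn f (norm ⁻¹' Ioc a b) μ) (hf_bc : IntegrableOn f (norm ⁻¹' Ioc b c) μ)
    (hf_c : IntegrableOn f (norm ⁻¹' Ioi c) μ) :
    ∫ x in norm ⁻¹' Ioi a, f x ∂μ =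
      (∫ x in norm ⁻¹' Ioc a b, f x ∂μ) + (∫ x in norm ⁻¹' Ioc b c, f x ∂μ) +
        ∫ x in norm ⁻¹' Ioi c, f x ∂μ := by
  have hf_ac : IntegrableOn f (norm ⁻¹' Ioc a c) μ := by
    rw [← Ioc_union_Ioc_eq_Ioc hab hbc, preimage_union]
    exact hf_ab.union hf_bc
  rw [← Ioc_union_Ioi_eq_Ioi (hab.trans hbc), preimage_union,
    setIntegral_union ((Ioc_disjoint_Ioi le_rfl).preimage _) (measurable_norm measurableSet_Ioi)
      hf_ac hf_c,
    ← Ioc_union_Ioc_eq_Ioc hab hbc, preimage_union,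
    setIntegral_union ((Ioc_disjoint_Ioc_of_le le_rfl).preimage _)
      (measurable_norm measurableSet_Ioc) hf_ab hf_bc]

end Auxiliary

section OddKernel

open Module (finrank)

variable {E F : Type*} [NormedAddCommGroup E] [NormedSpace ℝ E] [MeasurableSpace E]
  [NormedAddCommGroup F] {μ : Measure E} {K : E → F} {φ : E → ℝ} {A G : ℝ}

/-- An odd convolution kernel dominated by `|x|^{-d}` in dimension `d`, the critical size whose
integral diverges logarithmically both at `0` and at `∞`. The constant is normalized to `1`. -/
structure IsOddCriticalKernel (K : E → F) (μ : Measure E) : Prop where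
  aestronglyMeasurable : AEStronglyMeasurable K μ
  odd : K.Odd
  norm_le : ∀ x, ‖K x‖ ≤ (‖x‖ ^ finrank ℝ E)⁻¹

/-- The `L^q` norm of `|x|^{-d}` over `1 < |x|`, the constant in the bound for the far part of a
singular integral with a critical kernel. It is a finite norm only for `1 < q`. -/
def criticalTail (μ : Measure E) (q : ENNReal) : ℝ :=
  lpNorm (fun x ↦ (‖x‖ ^ finrank ℝ E)⁻¹) q (μ.restrict (norm ⁻¹' Ioi 1))

namespace IsOddCriticalKernel

lemma norm_smul_le [NormedSpace ℝ F] (hK : IsOddCriticalKernel K μ) {c C : ℝ} (hc : |c| ≤ C)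
    (x : E) : ‖c • K x‖ ≤ C * (‖x‖ ^ finrank ℝ E)⁻¹ := by
  rw [norm_smul, Real.norm_eq_abs]
  gcongr
  · exact (abs_nonneg c).trans hc
  · exact hK.norm_le x

variable [FiniteDimensional ℝ E] [Nontrivial E] [BorelSpace E] [μ.IsAddHaarMeasure]

lemma memLp_restrict_Ioi_one (hK : IsOddCriticalKernel K μ) {q : ENNReal} (hq : 1 < q) :
    MemLp K q (μ.restrict (norm ⁻¹' Ioi 1)) :=
  (memLp_inv_norm_pow_finrank_restrict_Ioi_one hq).mono' hK.aestronglyMeasurable.restrict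
    (ae_of_all _ hK.norm_le)

variable [NormedSpace ℝ F]

lemma integrableOn_smul_annulus (hK : IsOddCriticalKernel K μ) (hφ : AEStronglyMeasurable φ μ)
    (hA : ∀ y, |φ y| ≤ A) {a b : ℝ} (ha : 0 < a) :
    IntegrableOn (fun y ↦ φ y • K y) (norm ⁻¹' Ioc a b) μ :=
  ((integrableOn_inv_norm_pow_finrank ha).const_mul A).mono'
    (hφ.smul hK.aestronglyMeasurable).restrict
    (ae_of_all _ fun y ↦ hK.norm_smul_le (hA y) y)

lemma norm_setIntegral_annulus_le_of_bounded (hK : IsOddCriticalKernel K μ)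
    (hA : ∀ y, |φ y| ≤ A) {a b : ℝ} (ha : 0 < a) (hab : a ≤ b) :
    ‖∫ y in norm ⁻¹' Ioc a b, φ y • K y ∂μ‖ ≤
      μ.toSphere.real univ * (A * Real.log (b / a)) := by
  calc ‖∫ y in norm ⁻¹' Ioc a b, φ y • K y ∂μ‖
      ≤ ∫ y in norm ⁻¹' Ioc a b, A * (‖y‖ ^ finrank ℝ E)⁻¹ ∂μ :=
        norm_integral_le_of_norm_le ((integrableOn_inv_norm_pow_finrank ha).const_mul A)
          (ae_of_all _ fun y ↦ hK.norm_smul_le (hA y) y)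
    _ = μ.toSphere.real univ * (A * Real.log (b / a)) := by
        rw [integral_const_mul, setIntegral_inv_norm_pow_finrank ha hab, mul_left_comm]

lemma norm_setIntegral_annulus_le_of_lipschitz (hK : IsOddCriticalKernel K μ)
    (hφ : AEStronglyMeasurable φ μ) (hA : ∀ y, |φ y| ≤ A)
    (hG : ∀ y, |φ y - φ 0| ≤ G * ‖y‖) {a b : ℝ} (ha : 0 < a) (hab : a ≤ b) :
    ‖∫ y in norm ⁻¹' Ioc a b, φ y • K y ∂μ‖ ≤ μ.toSphere.real univ * (G * (b - a)) := by
  have hcancel : ∫ y in norm ⁻¹' Ioc a b, φ 0 • K y ∂μ = 0 := by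
    rw [integral_smul, setIntegral_eq_zero_of_odd hK.odd (by ext; simp), smul_zero]
  calc ‖∫ y in norm ⁻¹' Ioc a b, φ y • K y ∂μ‖
      = ‖∫ y in norm ⁻¹' Ioc a b, (φ y - φ 0) • K y ∂μ‖ := by
        simp only [sub_smul]
        rw [integral_sub (hK.integrableOn_smul_annulus hφ hA ha)
          (hK.integrableOn_smul_annulus aestronglyMeasurable_const (fun _ ↦ le_rfl) ha),
          hcancel, sub_zero]
    _ ≤ ∫ y in norm ⁻¹' Ioc a b, G * (‖y‖ * (‖y‖ ^ finrank ℝ E)⁻¹) ∂μ := by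
        refine norm_integral_le_of_norm_le
          ((integrableOn_norm_mul_inv_norm_pow_finrank ha).const_mul G) (ae_of_all _ fun y ↦ ?_)
        rw [← mul_assoc]
        exact hK.norm_smul_le (hG y) y
    _ = μ.toSphere.real univ * (G * (b - a)) := by
        rw [integral_const_mul, setIntegral_norm_mul_inv_norm_pow_finrank ha hab, mul_left_comm]

variable {p q : ENNReal} [p.HolderConjugate q]

lemma integrableOn_smul_Ioi_one (hK : IsOddCriticalKernel K μ) (hq : 1 < q)
    (hφ : MemLp φ p μ) : IntegrableOn (fun y ↦ φ y • K y) (norm ⁻¹' Ioi 1) μ :=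
  memLp_one_iff_integrable.1 ((hK.memLp_restrict_Ioi_one hq).smul (hφ.restrict _))

lemma norm_setIntegral_Ioi_one_le (hK : IsOddCriticalKernel K μ) (hq : 1 < q)
    (hφ : MemLp φ p μ) :
    ‖∫ y in norm ⁻¹' Ioi 1, φ y • K y ∂μ‖ ≤ lpNorm φ p μ * criticalTail μ q := by
  have hφ_restrict : lpNorm φ p (μ.restrict (norm ⁻¹' Ioi 1)) ≤ lpNorm φ p μ := by
    rw [← toReal_eLpNorm hφ.1, ← toReal_eLpNorm hφ.1.restrict]
    exact ENNReal.toReal_mono hφ.eLpNorm_ne_top (eLpNorm_restrict_le _ _ _ _)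
  refine (norm_integral_smul_le_lpNorm_mul_lpNorm (hφ.restrict _)
    (hK.memLp_restrict_Ioi_one hq)).trans ?_
  have hK_tail : lpNorm K q (μ.restrict (norm ⁻¹' Ioi 1)) ≤ criticalTail μ q :=
    lpNorm_mono_real (memLp_inv_norm_pow_finrank_restrict_Ioi_one hq) hK.norm_le
  exact mul_le_mul hφ_restrict hK_tail lpNorm_nonneg lpNorm_nonneg

theorem norm_truncated_integral_le (hK : IsOddCriticalKernel K μ) (hq : 1 < q)
    (hφ : MemLp φ p μ) (hA : ∀ y, |φ y| ≤ A) (hG : ∀ y, |φ y - φ 0| ≤ G * ‖y‖) (hG_one : 1 ≤ G)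
    {ε : ℝ} (hε : 0 < ε) (hεG : ε ≤ G⁻¹) :
    ‖∫ y in norm ⁻¹' Ioi ε, φ y • K y ∂μ‖ ≤
      μ.toSphere.real univ * (1 + A * Real.log G) + lpNorm φ p μ * criticalTail μ q := by
  have hG_pos : 0 < G := zero_lt_one.trans_le hG_one
  have hG_inv : 0 < G⁻¹ := inv_pos.2 hG_pos
  have hG_inv_le : G⁻¹ ≤ 1 := inv_le_one_of_one_le₀ hG_one
  have hnear : ‖∫ y in norm ⁻¹' Ioc ε G⁻¹, φ y • K y ∂μ‖ ≤ μ.toSphere.real univ * 1 := by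
    refine (hK.norm_setIntegral_annulus_le_of_lipschitz hφ.1 hA hG hε hεG).trans ?_
    gcongr
    rw [mul_sub, mul_inv_cancel₀ hG_pos.ne']
    exact sub_le_self 1 (by positivity)
  have hmid : ‖∫ y in norm ⁻¹' Ioc G⁻¹ 1, φ y • K y ∂μ‖ ≤
      μ.toSphere.real univ * (A * Real.log G) := by
    simpa using hK.norm_setIntegral_annulus_le_of_bounded hA hG_inv hG_inv_le
  have hfar := hK.norm_setIntegral_Ioi_one_le hq hφ
  rw [setIntegral_norm_preimage_Ioi_eq_add hεG hG_inv_le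
    (hK.integrableOn_smul_annulus hφ.1 hA hε) (hK.integrableOn_smul_annulus hφ.1 hA hG_inv)
    (hK.integrableOn_smul_Ioi_one hq hφ)]
  linarith [norm_add₃_le (a := ∫ y in norm ⁻¹' Ioc ε G⁻¹, φ y • K y ∂μ)
    (b := ∫ y in norm ⁻¹' Ioc G⁻¹ 1, φ y • K y ∂μ) (c := ∫ y in norm ⁻¹' Ioi 1, φ y • K y ∂μ)]

end IsOddCriticalKernel

end OddKernel

section Plane

open Complex (equivRealProdCLM)

lemma e2_equivRealProdCLM (z : ℂ) : e2 (equivRealProdCLM z) = ‖z‖ := by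
  simp [e2, Complex.norm_eq_sqrt_sq_add_sq]

lemma perp_equivRealProdCLM (z : ℂ) :
    perp (equivRealProdCLM z) = equivRealProdCLM (Complex.I * z) := by
  simp [perp]

lemma measurePreserving_equivRealProdCLM : MeasurePreserving equivRealProdCLM :=
  Complex.volume_preserving_equiv_real_prod

lemma measurableEmbedding_equivRealProdCLM : MeasurableEmbedding equivRealProdCLM :=
  equivRealProdCLM.toHomeomorph.measurableEmbedding

lemma continuous_e2 : Continuous e2 := by
  unfold e2
  fun_prop

lemma fderiv_apply_eq_mul_pd_add (θ : ℝ × ℝ → ℝ) (x v : ℝ × ℝ) :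
    fderiv ℝ θ x v = v.1 * pd θ v1 x + v.2 * pd θ v2 x := by
  have hv : v = v.1 • v1 + v.2 • v2 := by simp [v1, v2]
  conv_lhs => rw [hv]
  simp only [map_add, map_smul, smul_eq_mul, pd]

lemma abs_fderiv_apply_le (θ : ℝ × ℝ → ℝ) (x v : ℝ × ℝ) :
    |fderiv ℝ θ x v| ≤ e2 (grad2 θ x) * e2 v := by
  rw [e2, e2, ← Real.sqrt_mul (by positivity), fderiv_apply_eq_mul_pd_add]
  refine Real.abs_le_sqrt ?_
  simp only [grad2]
  nlinarith [sq_nonneg (v.1 * pd θ v2 x - v.2 * pd θ v1 x)]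

lemma abs_sub_le_of_e2_grad2_le {θ : ℝ × ℝ → ℝ} (hθ : Differentiable ℝ θ) {G : ℝ}
    (hG : ∀ y, e2 (grad2 θ y) ≤ G) (x y : ℝ × ℝ) : |θ (x + y) - θ x| ≤ G * e2 y := by
  have hderiv (z : ℂ) : HasFDerivAt (θ ∘ equivRealProdCLM)
      ((fderiv ℝ θ (equivRealProdCLM z)).comp (equivRealProdCLM : ℂ →L[ℝ] ℝ × ℝ)) z :=
    (hθ _).hasFDerivAt.comp z equivRealProdCLM.hasFDerivAt
  have hderiv_le (z : ℂ) :
      ‖(fderiv ℝ θ (equivRealProdCLM z)).comp (equivRealProdCLM : ℂ →L[ℝ] ℝ × ℝ)‖ ≤ G := by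
    refine ContinuousLinearMap.opNorm_le_bound _ ((Real.sqrt_nonneg _).trans (hG 0)) fun v ↦ ?_
    calc |fderiv ℝ θ (equivRealProdCLM z) (equivRealProdCLM v)|
        ≤ e2 (grad2 θ (equivRealProdCLM z)) * e2 (equivRealProdCLM v) :=
          abs_fderiv_apply_le θ _ _
      _ ≤ G * ‖v‖ := by
          rw [e2_equivRealProdCLM]
          gcongr
          exact hG _
  obtain ⟨x, rfl⟩ := equivRealProdCLM.surjective x
  obtain ⟨y, rfl⟩ := equivRealProdCLM.surjective y
  rw [← map_add, e2_equivRealProdCLM]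
  simpa only [add_sub_cancel_left, Function.comp_apply, Real.norm_eq_abs] using
    convex_univ.norm_image_sub_le_of_norm_hasFDerivWithin_le
      (fun z _ ↦ (hderiv z).hasFDerivWithinAt) (fun z _ ↦ hderiv_le z) (mem_univ x)
      (mem_univ (x + y))

/-- The kernel `y^⊥ / |y|³` of the velocity, written on `ℂ ≅ ℝ²`, where `⊥` is multiplication
by `I`. -/
def velocityKernel (z : ℂ) : ℂ := (‖z‖ ^ 3)⁻¹ • (Complex.I * z)

lemma isOddCriticalKernel_velocityKernel : IsOddCriticalKernel velocityKernel volume where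
  aestronglyMeasurable := by unfold velocityKernel; fun_prop
  odd z := by simp [velocityKernel]
  norm_le z := by
    obtain rfl | hz := eq_or_ne z 0
    · simp [velocityKernel]
    have : ‖z‖ ≠ 0 := norm_ne_zero_iff.2 hz
    rw [velocityKernel, norm_smul, norm_mul, Complex.norm_I, Complex.finrank_real_complex,
      Real.norm_of_nonneg (by positivity)]
    exact le_of_eq (by field_simp)

lemma setIntegral_smul_perp_eq (θ : ℝ × ℝ → ℝ) (x : ℝ × ℝ) (ε : ℝ) :
    ∫ y in {y | ε < e2 y}, (θ (x + y) / e2 y ^ 3) • perp y =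
      equivRealProdCLM
        (∫ z in norm ⁻¹' Ioi ε, θ (x + equivRealProdCLM z) • velocityKernel z) := by
  have hpre : equivRealProdCLM ⁻¹' {y | ε < e2 y} = norm ⁻¹' Ioi ε := by
    ext z
    simp only [mem_preimage, mem_ofPred_eq, e2_equivRealProdCLM, mem_Ioi]
  rw [← measurePreserving_equivRealProdCLM.setIntegral_preimage_emb
    measurableEmbedding_equivRealProdCLM, hpre, ← ContinuousLinearEquiv.integral_comp_comm]
  simp only [e2_equivRealProdCLM, perp_equivRealProdCLM, velocityKernel, map_smul, smul_smul,
    div_eq_mul_inv]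

lemma measurePreserving_add_equivRealProdCLM (x : ℝ × ℝ) :
    MeasurePreserving fun z : ℂ ↦ x + equivRealProdCLM z :=
  (measurePreserving_add_left volume x).comp measurePreserving_equivRealProdCLM

lemma lpNorm_comp_add_equivRealProdCLM {p : ENNReal} {θ : ℝ × ℝ → ℝ}
    (hθ : AEStronglyMeasurable θ) (x : ℝ × ℝ) :
    lpNorm (fun z : ℂ ↦ θ (x + equivRealProdCLM z)) p volume = lpNorm θ p volume := by
  have hx := measurePreserving_add_equivRealProdCLM x
  rw [← toReal_eLpNorm hθ, ← eLpNorm_comp_measurePreserving hθ hx,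
    toReal_eLpNorm (hθ.comp_measurePreserving hx), Function.comp_def]

theorem e2_truncated_integral_le {p q : ENNReal} [p.HolderConjugate q] (hq : 1 < q)
    {θ : ℝ × ℝ → ℝ} (hθ : MemLp θ p) {A G : ℝ} (hA : ∀ y, |θ y| ≤ A) {x : ℝ × ℝ}
    (hG : ∀ y, |θ (x + y) - θ x| ≤ G * e2 y) (hG_one : 1 ≤ G) {ε : ℝ} (hε : 0 < ε)
    (hεG : ε ≤ G⁻¹) :
    e2 (∫ y in {y | ε < e2 y}, (θ (x + y) / e2 y ^ 3) • perp y) ≤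
      (volume : Measure ℂ).toSphere.real univ * (1 + A * Real.log G) +
        lpNorm θ p volume * criticalTail (volume : Measure ℂ) q := by
  rw [setIntegral_smul_perp_eq, e2_equivRealProdCLM, ← lpNorm_comp_add_equivRealProdCLM hθ.1 x]
  refine isOddCriticalKernel_velocityKernel.norm_truncated_integral_le hq
    (hθ.comp_measurePreserving (measurePreserving_add_equivRealProdCLM x)) (fun z ↦ hA _)
    (fun z ↦ ?_) hG_one hε hεG
  simpa only [Function.comp_apply, map_zero, add_zero, e2_equivRealProdCLM] using
    hG (equivRealProdCLM z)

end Plane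

theorem velocity_log_gradient_bound_general {p : ENNReal} (hp : 1 ≤ p) (hp_top : p ≠ ⊤)
    (A M : ℝ) :
    ∃ C : ℝ, 0 < C ∧
      ∀ (θ : ℝ × ℝ → ℝ) (G : ℝ) (x w : ℝ × ℝ),
        (∀ y, |θ y| ≤ A) →
        MemLp θ p →
        lpNorm θ p volume ≤ M →
        (∀ y, |θ (x + y) - θ x| ≤ G * e2 y) →
        Real.exp 1 ≤ G →
        Tendsto (fun ε : ℝ ↦ ∫ y in {y : ℝ × ℝ | ε < e2 y}, (θ (x + y) / e2 y ^ 3) • perp y)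
          (𝓝[>] 0) (𝓝 w) →
        e2 w ≤ C * Real.log G := by
  have := ENNReal.HolderConjugate.conjExponent hp
  have hq : 1 < p.conjExponent := (ENNReal.HolderConjugate.lt_top_iff_one_lt p _).1 hp_top.lt_top
  set σ := (volume : Measure ℂ).toSphere.real univ
  set τ := criticalTail (volume : Measure ℂ) p.conjExponent
  have : 0 ≤ σ := measureReal_nonneg
  have : 0 ≤ τ := lpNorm_nonneg
  refine ⟨σ * (1 + |A|) + |M| * τ + 1, by positivity, fun θ G x w hA hθ hM hG hexp hw ↦ ?_⟩
  have hG_one : 1 ≤ G := (Real.one_le_exp zero_le_one).trans hexp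
  have hG_pos : 0 < G := zero_lt_one.trans_le hG_one
  have hlog : 1 ≤ Real.log G := (Real.le_log_iff_exp_le hG_pos).2 hexp
  have htrunc : e2 w ≤ σ * (1 + A * Real.log G) + lpNorm θ p volume * τ := by
    refine le_of_tendsto ((continuous_e2.tendsto w).comp hw) ?_
    filter_upwards [Ioc_mem_nhdsGT (inv_pos.2 hG_pos)] with ε hε
    exact e2_truncated_integral_le hq hθ hA hG hG_one hε.1 hε.2
  calc e2 w ≤ σ * (1 + A * Real.log G) + lpNorm θ p volume * τ := htrunc
    _ ≤ σ * (Real.log G + |A| * Real.log G) + (|M| * Real.log G) * τ + Real.log G := by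
        have hM_log : lpNorm θ p volume ≤ |M| * Real.log G :=
          (hM.trans (le_abs_self M)).trans (le_mul_of_one_le_right (abs_nonneg M) hlog)
        refine le_add_of_le_of_nonneg ?_ (by positivity)
        gcongr
        exact le_abs_self A
    _ = (σ * (1 + |A|) + |M| * τ + 1) * Real.log G := by ring

/-- **Logarithmic velocity bound.** Let `θ : ℝ² → ℝ` be `C¹`, in `L^∞ ∩ L² ∩ L¹` with
norms bounded by `A`, `B`, `D`, with `|∇θ| ≤ G` and `G ≥ e`, and let
`u(x) = P.V.∫ y^⊥ θ(x+y)/|y|³ dy`. Then `|u(x)| ≤ C log G` for all `x`, where `C`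
depends only on `A`, `B`, `D`. -/
theorem velocity_log_gradient_bound (A B D : ℝ) :
    ∃ C : ℝ, 0 < C ∧
      ∀ θ : ℝ × ℝ → ℝ, ∀ u : ℝ × ℝ → ℝ × ℝ, ∀ G : ℝ,
        ContDiff ℝ 1 θ →
        (∀ y, |θ y| ≤ A) →
        Integrable (fun y => (θ y) ^ 2) →
        Real.sqrt (∫ y, (θ y) ^ 2) ≤ B →
        Integrable θ →
        (∫ y, |θ y|) ≤ D →
        (∀ y, e2 (grad2 θ y) ≤ G) →
        Real.exp 1 ≤ G →
        (∀ x : ℝ × ℝ,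
          Tendsto (fun ε : ℝ =>
              ∫ y in {y : ℝ × ℝ | ε < e2 y}, (θ (x + y) / (e2 y) ^ 3) • perp y)
            (𝓝[>] 0) (𝓝 (u x))) →
        ∀ x : ℝ × ℝ, e2 (u x) ≤ C * Real.log G := by
  obtain ⟨C, hC, hbound⟩ := velocity_log_gradient_bound_general le_rfl ENNReal.one_ne_top A D
  refine ⟨C, hC, fun θ u G hθ hA _ _ hI hD hG hexp hu x ↦ hbound θ G x (u x) hA
    (memLp_one_iff_integrable.2 hI) ?_
    (abs_sub_le_of_e2_grad2_le (hθ.differentiable one_ne_zero) hG x) hexp (hu x)⟩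
  rwa [lpNorm_one_eq_integral_norm hI.1]

end
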